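/- Let p, q ∈ Φ with p ≠ q, and let n(p), n(q) ∈ ℕ^d be their level vectors. If there exists a coordinate k with n_k(p) > n_k(q), or if n(p) = n(q), then the hierarchical hat function of p vanishes at q: φ_p(q) = 0. In particular, φ_p vanishes at every point in the hierarchical chain of ancestors of p, all the way back to the origin. -/

import Mathlib

/-- The one-dimensional sparse grid level sets: `Γ(n) = ∅` for `n < 0`, `Γ(0) = {0}`,
and `Γ(n) = {2^{1-n} j : j ∈ ℤ, |j| ≤ 2^{n-1}}` for `n ≥ 1`. -/
def sgLevel (n : ℤ) : Set ℝ :=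
  if n < 0 then ∅
  else if n = 0 then {0}
  else {x | ∃ j : ℤ, |j| ≤ 2 ^ (n - 1).toNat ∧ x = (2 : ℝ) ^ (1 - n) * (j : ℝ)}

/-- The tensor grid `Γ(𝐧) = Γ(n₁) × ⋯ × Γ(n_d)`. -/
def tensorGrid (d : ℕ) (nv : Fin d → ℤ) : Set (Fin d → ℝ) :=
  {x | ∀ k, x k ∈ sgLevel (nv k)}

/-- `Φ = ⋃_{𝐧 ∈ ℤ^d} Γ(𝐧)`. -/
def sgPoints (d : ℕ) : Set (Fin d → ℝ) :=
  ⋃ nv : Fin d → ℤ, tensorGrid d nv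

/-- The level of a coordinate: `lvl(t) = min {n ≥ 0 : t ∈ Γ(n)}`. -/
noncomputable def lvl (t : ℝ) : ℕ :=
  sInf {n : ℕ | t ∈ sgLevel (n : ℤ)}

/-- One-dimensional hat functions: `φ̂_{p,0} ≡ 1`, and for `n ≥ 1`,
`φ̂_{p,n}(x) = max(0, 1 - 2^{n-1}|x - p|)`. -/
def hat1 (p : ℝ) (n : ℕ) (x : ℝ) : ℝ :=
  if n = 0 then 1 else max 0 (1 - 2 ^ (n - 1) * |x - p|)

/-- The hierarchical hat function of `p ∈ Φ`: `φ_p(x) = Π_k φ̂_{p_k, n_k(p)}(x_k)`. -/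
noncomputable def hierHat (d : ℕ) (p x : Fin d → ℝ) : ℝ :=
  ∏ k, hat1 (p k) (lvl (p k)) (x k)

/-!
The level sets `Γ(n)` increase with `n`, and for `n ≥ 1` distinct points of `Γ(n)` are at least
`2^{1-n}` apart, which is the half-width of the support of `φ̂_{p,n}`. So for `p ∈ Γ(n)` the hat
`φ̂_{p,n}` vanishes at every other point of `Γ(n)`, and a single coordinate in which `q` differs
from `p` without having a higher level makes the product `φ_p(q)` vanish.
-/

theorem sgLevel_of_neg {n : ℤ} (hn : n < 0) : sgLevel n = ∅ :=
  if_pos hn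

theorem sgLevel_zero : sgLevel 0 = {0} := by
  simp [sgLevel]

theorem mem_sgLevel_natCast_add_one {n : ℕ} {t : ℝ} :
    t ∈ sgLevel (n + 1) ↔ ∃ j : ℤ, |j| ≤ 2 ^ n ∧ 2 ^ n * t = j := by
  have hneg : ¬ (n + 1 : ℤ) < 0 := by lia
  have hne : (n + 1 : ℤ) ≠ 0 := by lia
  have hexp : (1 - (n + 1) : ℤ) = -n := by ring
  have hpow : (2 : ℝ) ^ n ≠ 0 := by positivity
  rw [sgLevel, if_neg hneg, if_neg hne]
  simp only [Set.mem_ofPred_eq, add_sub_cancel_right, Int.toNat_natCast, hexp, zpow_neg,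
    zpow_natCast, eq_inv_mul_iff_mul_eq₀ hpow]

theorem sgLevel_mono : Monotone sgLevel := by
  refine monotone_int_of_le_succ fun n t ht ↦ ?_
  rcases lt_trichotomy n 0 with hn | rfl | hn
  · simp [sgLevel_of_neg hn] at ht
  · obtain rfl : t = 0 := by simpa [sgLevel_zero] using ht
    exact mem_sgLevel_natCast_add_one (n := 0).mpr ⟨0, by simp, by simp⟩
  · obtain ⟨m, rfl⟩ : ∃ m : ℕ, n = m + 1 := ⟨(n - 1).toNat, by lia⟩
    obtain ⟨j, hj, htj⟩ := mem_sgLevel_natCast_add_one.mp ht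
    have hj' : |2 * j| ≤ 2 ^ (m + 1) := by
      rw [abs_mul, abs_two, pow_succ']
      gcongr
    have htj' : 2 ^ (m + 1) * t = (2 * j : ℤ) := by
      rw [pow_succ', mul_assoc, htj]
      norm_cast
    exact_mod_cast mem_sgLevel_natCast_add_one.mpr ⟨2 * j, hj', htj'⟩

theorem mem_sgLevel_lvl {t : ℝ} {n : ℤ} (ht : t ∈ sgLevel n) : t ∈ sgLevel (lvl t) :=
  Nat.sInf_mem (s := {m : ℕ | t ∈ sgLevel m}) ⟨n.toNat, sgLevel_mono n.self_le_toNat ht⟩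

theorem mem_sgLevel_lvl_of_mem_sgPoints {d : ℕ} {p : Fin d → ℝ} (hp : p ∈ sgPoints d)
    (k : Fin d) : p k ∈ sgLevel (lvl (p k)) := by
  obtain ⟨n, hn⟩ := Set.mem_iUnion.mp hp
  exact mem_sgLevel_lvl (hn k)

theorem one_le_two_pow_mul_abs_sub_of_mem_sgLevel {n : ℕ} {s t : ℝ} (hs : s ∈ sgLevel (n + 1))
    (ht : t ∈ sgLevel (n + 1)) (hst : s ≠ t) : 1 ≤ 2 ^ n * |s - t| := by
  obtain ⟨i, -, hi⟩ := mem_sgLevel_natCast_add_one.mp hs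
  obtain ⟨j, -, hj⟩ := mem_sgLevel_natCast_add_one.mp ht
  have hij : i ≠ j := by
    rintro rfl
    exact hst (mul_left_cancel₀ (by positivity) (hi.trans hj.symm))
  calc (1 : ℝ) ≤ |(i : ℝ) - j| := mod_cast Int.one_le_abs (sub_ne_zero.mpr hij)
    _ = |2 ^ n * (s - t)| := by rw [mul_sub, hi, hj]
    _ = 2 ^ n * |s - t| := by rw [abs_mul, abs_of_pos (by positivity)]

theorem hat1_add_one_eq_zero_iff {p x : ℝ} {n : ℕ} :
    hat1 p (n + 1) x = 0 ↔ 1 ≤ 2 ^ n * |x - p| := by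
  simp [hat1]

theorem hat1_eq_zero_of_mem_sgLevel {p x : ℝ} {n : ℕ} (hp : p ∈ sgLevel n) (hx : x ∈ sgLevel n)
    (hxp : x ≠ p) : hat1 p n x = 0 := by
  cases n with
  | zero =>
    simp only [Nat.cast_zero, sgLevel_zero, Set.mem_singleton_iff] at hp hx
    exact absurd (hx.trans hp.symm) hxp
  | succ n =>
    rw [Nat.cast_succ] at hp hx
    exact hat1_add_one_eq_zero_iff.mpr (one_le_two_pow_mul_abs_sub_of_mem_sgLevel hx hp hxp)

theorem hierHat_vanishes_general {d : ℕ} {p q : Fin d → ℝ} (hp : p ∈ sgPoints d)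
    (hq : q ∈ sgPoints d) {k : Fin d} (hne : q k ≠ p k) (hle : lvl (q k) ≤ lvl (p k)) :
    hierHat d p q = 0 := by
  have hpk : p k ∈ sgLevel (lvl (p k)) := mem_sgLevel_lvl_of_mem_sgPoints hp k
  have hqk : q k ∈ sgLevel (lvl (p k)) :=
    sgLevel_mono (mod_cast hle) (mem_sgLevel_lvl_of_mem_sgPoints hq k)
  exact Finset.prod_eq_zero (Finset.mem_univ k) (hat1_eq_zero_of_mem_sgLevel hpk hqk hne)

/-- Let `p, q ∈ Φ`, `p ≠ q`, with level vectors `n(p), n(q)`. If some coordinate `k`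
satisfies `n_k(p) > n_k(q)`, or if `n(p) = n(q)`, then `φ_p(q) = 0`. -/
theorem hierHat_vanishes (d : ℕ) (p q : Fin d → ℝ)
    (hp : p ∈ sgPoints d) (hq : q ∈ sgPoints d) (hpq : p ≠ q)
    (h : (∃ k, lvl (q k) < lvl (p k)) ∨ ∀ k, lvl (p k) = lvl (q k)) :
    hierHat d p q = 0 := by
  obtain ⟨k, hlt⟩ | heq := h
  · exact hierHat_vanishes_general hp hq (ne_of_apply_ne lvl hlt.ne) hlt.le
  · obtain ⟨k, hk⟩ := Function.ne_iff.mp hpq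
    exact hierHat_vanishes_general hp hq hk.symm (heq k).ge
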